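/- arXiv:2002.01167 — 5 statements merged into one kernel-verified Lean document; each statement's English description precedes it below -/
import Mathlib

section
/- Let d ≥ 1 and let μ be the probability measure on ℝ^d with density proportional to exp(−|x|⁴/4). Then for every compactly supported smooth function f : ℝ^d → ℝ one has Ent_μ(f²) ≤ 3√3·e · ∫_{ℝ^d} |∇f|² dμ. In particular, μ satisfies a logarithmic Sobolev inequality with a constant independent of the dimension d. -/
open Real MeasureTheory Finset Matrix Set

noncomputable section

/-- Partial derivative of `f` in the `i`-th coordinate direction. -/
def pd {d : ℕ} (i : Fin d) (f : EuclideanSpace ℝ (Fin d) → ℝ)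
    (x : EuclideanSpace ℝ (Fin d)) : ℝ :=
  fderiv ℝ f x (EuclideanSpace.single i 1)

/-- Laplacian of `f`. -/
def lap {d : ℕ} (f : EuclideanSpace ℝ (Fin d) → ℝ) (x : EuclideanSpace ℝ (Fin d)) : ℝ :=
  ∑ i, pd i (fun y => pd i f y) x

/-- Diffusion operator `L f = Δ f - ∇V ⋅ ∇f` associated with the potential `V`. -/
def diffOp {d : ℕ} (V f : EuclideanSpace ℝ (Fin d) → ℝ) (x : EuclideanSpace ℝ (Fin d)) : ℝ :=
  lap f x - ∑ i, pd i V x * pd i f x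

/-- Hessian matrix of `V` at `x`. -/
def hess {d : ℕ} (V : EuclideanSpace ℝ (Fin d) → ℝ) (x : EuclideanSpace ℝ (Fin d)) :
    Matrix (Fin d) (Fin d) ℝ :=
  Matrix.of fun i j => pd i (fun y => pd j V y) x

/-- Smallest (real) eigenvalue of a matrix: the infimum of its real spectrum. -/
def minEig {d : ℕ} (A : Matrix (Fin d) (Fin d) ℝ) : ℝ :=
  sInf (spectrum ℝ A)

/-- The probability measure with density proportional to `exp (-V)` w.r.t. Lebesgue measure. -/
def gibbs {d : ℕ} (V : EuclideanSpace ℝ (Fin d) → ℝ) : Measure (EuclideanSpace ℝ (Fin d)) :=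
  (∫⁻ x, ENNReal.ofReal (Real.exp (-V x)))⁻¹ •
    volume.withDensity fun x => ENNReal.ofReal (Real.exp (-V x))

/-- Entropy of `g` with respect to the measure `μ`. -/
def entropy {d : ℕ} (μ : Measure (EuclideanSpace ℝ (Fin d)))
    (g : EuclideanSpace ℝ (Fin d) → ℝ) : ℝ :=
  ∫ x, g x * Real.log (g x) ∂μ - (∫ x, g x ∂μ) * Real.log (∫ x, g x ∂μ)

/-- Squared Euclidean norm of the gradient of `f` at `x`. -/
def gradSq {d : ℕ} (f : EuclideanSpace ℝ (Fin d) → ℝ) (x : EuclideanSpace ℝ (Fin d)) : ℝ :=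
  ∑ i, (pd i f x) ^ 2

end

section PL

open scoped ENNReal NNReal Topology Pointwise
open Filter

/-- One-dimensional Brunn-Minkowski, compact case. -/
lemma bm_compact {t s : ℝ} (ht : 0 < t) (hs : 0 < s) {K L S : Set ℝ}
    (hK : IsCompact K) (hL : IsCompact L) (hKn : K.Nonempty) (hLn : L.Nonempty)
    (h : ∀ x ∈ K, ∀ y ∈ L, t * x + s * y ∈ S) :
    ENNReal.ofReal t * volume K + ENNReal.ofReal s * volume L ≤ volume S := by
  obtain ⟨k, hkK, hk⟩ := hK.exists_isGreatest hKn
  obtain ⟨l, hlL, hl⟩ := hL.exists_isLeast hLn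
  have e1 : volume ((fun x => x + s * l) '' (t • K)) = ENNReal.ofReal t * volume K := by
    rw [Set.image_add_right, measure_preimage_add_right, Measure.addHaar_smul]
    simp [abs_of_pos ht]
  have e2 : volume ((fun x => t * k + x) '' (s • L)) = ENNReal.ofReal s * volume L := by
    rw [Set.image_add_left, measure_preimage_add, Measure.addHaar_smul]
    simp [abs_of_pos hs]
  have hm : MeasurableSet ((fun x => t * k + x) '' (s • L)) :=
    ((hL.smul s).image (by fun_prop)).measurableSet
  rw [← e1, ← e2, ← measure_union₀ hm.nullMeasurableSet]
  · apply measure_mono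
    rintro z (⟨_, ⟨x, hx, rfl⟩, rfl⟩ | ⟨_, ⟨x, hx, rfl⟩, rfl⟩)
    · exact h x hx l hlL
    · exact h k hkK x hx
  · refine measure_mono_null (t := {t * k + s * l}) ?_ (by simp)
    rintro z ⟨⟨_, ⟨x, hx, rfl⟩, rfl⟩, ⟨_, ⟨y, hy, rfl⟩, hxy⟩⟩
    have h1 : t * x ≤ t * k := mul_le_mul_of_nonneg_left (hk hx) ht.le
    have h2 : s * l ≤ s * y := mul_le_mul_of_nonneg_left (hl hy) hs.le
    simp only [smul_eq_mul] at hxy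
    simp only [Set.mem_singleton_iff, smul_eq_mul]
    linarith

/-- One-dimensional Brunn-Minkowski. -/
lemma bm_meas {t s : ℝ} (ht : 0 < t) (hs : 0 < s) {A B S : Set ℝ}
    (hA : MeasurableSet A) (hB : MeasurableSet B) (hAn : A.Nonempty) (hBn : B.Nonempty)
    (h : ∀ x ∈ A, ∀ y ∈ B, t * x + s * y ∈ S) :
    ENNReal.ofReal t * volume A + ENNReal.ofReal s * volume B ≤ volume S := by
  obtain ⟨a, ha⟩ := hAn
  obtain ⟨b, hb⟩ := hBn
  have key : ∀ K ⊆ A, IsCompact K → ∀ L ⊆ B, IsCompact L →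
      ENNReal.ofReal t * volume K + ENNReal.ofReal s * volume L ≤ volume S := by
    intro K hKA hK L hLB hL
    refine le_trans ?_ (bm_compact ht hs (K := insert a K) (L := insert b L) (hK.insert a)
      (hL.insert b) ⟨a, by simp⟩ ⟨b, by simp⟩ fun x hx y hy => h x ?_ y ?_)
    · gcongr <;> exact Set.subset_insert _ _
    · exact Set.insert_subset ha hKA hx
    · exact Set.insert_subset hb hLB hy
  have rep : ∀ C : Set ℝ, MeasurableSet C →
      volume C = ⨆ K : {K : Set ℝ // K ⊆ C ∧ IsCompact K}, volume (K : Set ℝ) := by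
    intro C hC
    rw [hC.measure_eq_iSup_isCompact, iSup_subtype]
    simp only [iSup_and]
  have : ∀ C : Set ℝ, Nonempty {K : Set ℝ // K ⊆ C ∧ IsCompact K} :=
    fun C => ⟨⟨∅, by simp⟩⟩
  rw [rep A hA, rep B hB, ENNReal.mul_iSup, ENNReal.mul_iSup]
  exact ENNReal.iSup_add_iSup_le fun K L => key K K.2.1 K.2.2 L L.2.1 L.2.2

lemma amgm_ennreal {t s : ℝ} (ht : 0 < t) (hs : 0 < s) (hts : t + s = 1) (a b : ℝ≥0∞) :
    a ^ t * b ^ s ≤ ENNReal.ofReal t * a + ENNReal.ofReal s * b := by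
  by_cases ha : a = ⊤
  · subst ha; simp [ENNReal.mul_top, ht]
  by_cases hb : b = ⊤
  · subst hb; simp [ENNReal.mul_top, hs]
  lift a to ℝ≥0 using ha
  lift b to ℝ≥0 using hb
  have := NNReal.geom_mean_le_arith_mean2_weighted ⟨t, ht.le⟩ ⟨s, hs.le⟩ a b
    (NNReal.coe_inj.1 hts)
  rw [← ENNReal.coe_rpow_of_nonneg _ ht.le, ← ENNReal.coe_rpow_of_nonneg _ hs.le,
    ENNReal.ofReal_eq_coe_nnreal ht.le, ENNReal.ofReal_eq_coe_nnreal hs.le]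
  exact_mod_cast this

/-- Normalised one-dimensional Prékopa-Leindler for real functions. -/
lemma pl_core {t s : ℝ} (ht : 0 < t) (hs : 0 < s) (hts : t + s = 1) {u v w : ℝ → ℝ}
    (hu : Measurable u) (hv : Measurable v) (hw : Measurable w)
    (hu0 : ∀ x, 0 ≤ u x) (hv0 : ∀ x, 0 ≤ v x) (hw0 : ∀ x, 0 ≤ w x)
    (hu1 : ∀ x, u x ≤ 1) (hv1 : ∀ x, v x ≤ 1)
    (hus : ∀ l < 1, ∃ x, l < u x) (hvs : ∀ l < 1, ∃ x, l < v x)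
    (h : ∀ x y, u x ^ t * v y ^ s ≤ w (t * x + s * y)) :
    ENNReal.ofReal t * (∫⁻ x, ENNReal.ofReal (u x)) +
        ENNReal.ofReal s * (∫⁻ x, ENNReal.ofReal (v x))
      ≤ ∫⁻ x, ENNReal.ofReal (w x) := by
  rw [lintegral_eq_lintegral_meas_lt _ (ae_of_all _ hu0) hu.aemeasurable,
    lintegral_eq_lintegral_meas_lt _ (ae_of_all _ hv0) hv.aemeasurable,
    lintegral_eq_lintegral_meas_lt _ (ae_of_all _ hw0) hw.aemeasurable]
  have anti : ∀ f : ℝ → ℝ, Measurable fun l : ℝ => volume {a | l < f a} := fun f =>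
    Antitone.measurable fun a b hab => measure_mono fun x hx => lt_of_le_of_lt hab hx
  rw [← lintegral_const_mul _ (anti u), ← lintegral_const_mul _ (anti v),
    ← lintegral_add_left ((anti u).const_mul _)]
  refine setLIntegral_mono (anti w) fun l hl => ?_
  have hl : 0 < l := hl
  by_cases hl1 : l < 1
  · refine bm_meas ht hs (measurableSet_lt measurable_const hu)
      (measurableSet_lt measurable_const hv) (hus l hl1) (hvs l hl1) fun x hx y hy => ?_
    refine lt_of_lt_of_le ?_ (h x y)
    have hx : l < u x := hx
    have hy : l < v y := hy
    calc l = l ^ t * l ^ s := by rw [← Real.rpow_add hl, hts, Real.rpow_one]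
      _ < u x ^ t * v y ^ s := by
        apply mul_lt_mul''
        · exact Real.rpow_lt_rpow hl.le hx ht
        · exact Real.rpow_lt_rpow hl.le hy hs
        · positivity
        · positivity
  · have e1 : {a | l < u a} = ∅ := by
      ext x; simp only [Set.mem_ofPred_eq, Set.mem_empty_iff_false, iff_false]
      linarith [hu1 x]
    have e2 : {a | l < v a} = ∅ := by
      ext x; simp only [Set.mem_ofPred_eq, Set.mem_empty_iff_false, iff_false]
      linarith [hv1 x]
    simp [e1, e2]

/-- The Prékopa-Leindler property of a measure. -/
def PLProp {E : Type*} [AddCommMonoid E] [Module ℝ E] [MeasurableSpace E] (μ : Measure E) : Prop :=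
  ∀ t s : ℝ, 0 < t → 0 < s → t + s = 1 → ∀ u v w : E → ℝ≥0∞, Measurable u → Measurable v →
    Measurable w → (∀ x y, u x ^ t * v y ^ s ≤ w (t • x + s • y)) →
    (∫⁻ x, u x ∂μ) ^ t * (∫⁻ x, v x ∂μ) ^ s ≤ ∫⁻ x, w x ∂μ

lemma exists_lt_normalized {u : ℝ → ℝ≥0∞} (h0 : ⨆ x, u x ≠ 0) (ht : ⨆ x, u x ≠ ⊤) :
    ∀ l < 1, ∃ x, l < (u x / ⨆ x, u x).toReal := by
  intro l hl
  have hlt : ENNReal.ofReal l * (⨆ x, u x) < ⨆ x, u x := by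
    calc ENNReal.ofReal l * (⨆ x, u x) < 1 * (⨆ x, u x) :=
          ENNReal.mul_lt_mul_left h0 ht (by simpa using hl)
      _ = _ := one_mul _
  obtain ⟨x, hx⟩ := lt_iSup_iff.1 hlt
  refine ⟨x, ?_⟩
  have h1 : ENNReal.ofReal l < u x / ⨆ x, u x :=
    (ENNReal.lt_div_iff_mul_lt (Or.inl h0) (Or.inl ht)).2 hx
  have h2 : u x / (⨆ x, u x) ≠ ⊤ :=
    ENNReal.div_ne_top ((le_iSup u x).trans_lt (lt_top_iff_ne_top.2 ht)).ne h0
  rcases lt_or_ge l 0 with hneg | hpos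
  · exact hneg.trans_le ENNReal.toReal_nonneg
  · exact (ENNReal.ofReal_lt_iff_lt_toReal hpos h2).1 h1

lemma pl_bdd {t s : ℝ} (ht : 0 < t) (hs : 0 < s) (hts : t + s = 1) {u v w : ℝ → ℝ≥0∞}
    (hu : Measurable u) (hv : Measurable v) (hw : Measurable w)
    (hub : ⨆ x, u x ≠ ⊤) (hvb : ⨆ x, v x ≠ ⊤)
    (h : ∀ x y, u x ^ t * v y ^ s ≤ w (t • x + s • y)) :
    (∫⁻ x, u x) ^ t * (∫⁻ x, v x) ^ s ≤ ∫⁻ x, w x := by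
  set a := ⨆ x, u x with ha
  set b := ⨆ x, v x with hb
  have hua : ∀ x, u x ≤ a := fun x => le_iSup u x
  have hvb' : ∀ x, v x ≤ b := fun x => le_iSup v x
  by_cases ha0 : a = 0
  · have : ∀ x, u x = 0 := fun x => by simpa [ha0] using hua x
    simp [this, ht]
  by_cases hb0 : b = 0
  · have : ∀ x, v x = 0 := fun x => by simpa [hb0] using hvb' x
    simp [this, hs]
  have hu1 : ∀ x, u x / a ≤ 1 := fun x => ENNReal.div_le_of_le_mul (by simpa using hua x)
  have hv1 : ∀ x, v x / b ≤ 1 := fun x => ENNReal.div_le_of_le_mul (by simpa using hvb' x)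
  set c := a ^ t * b ^ s with hc
  have hat0 : a ^ t ≠ 0 := by simp [ha0, hub]
  have hbs0 : b ^ s ≠ 0 := by simp [hb0, hvb]
  have hatt : a ^ t ≠ ⊤ := ENNReal.rpow_ne_top_of_nonneg ht.le hub
  have hbst : b ^ s ≠ ⊤ := ENNReal.rpow_ne_top_of_nonneg hs.le hvb
  have hc0 : c ≠ 0 := mul_ne_zero hat0 hbs0
  have hct : c ≠ ⊤ := ENNReal.mul_ne_top hatt hbst
  have hdiv : ∀ p q : ℝ≥0∞, (p / a) ^ t * (q / b) ^ s = p ^ t * q ^ s / c := by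
    intro p q
    rw [ENNReal.div_rpow_of_nonneg _ _ ht.le, ENNReal.div_rpow_of_nonneg _ _ hs.le, hc,
      div_eq_mul_inv, div_eq_mul_inv, div_eq_mul_inv,
      ENNReal.mul_inv (Or.inl hat0) (Or.inl hatt)]
    ring
  have key := pl_core ht hs hts (u := fun x => (u x / a).toReal) (v := fun x => (v x / b).toReal)
    (w := fun x => (min (w x / c) 1).toReal)
    (hu.div_const a).ennreal_toReal (hv.div_const b).ennreal_toReal
    ((hw.div_const c).min measurable_const).ennreal_toReal
    (fun x => ENNReal.toReal_nonneg) (fun x => ENNReal.toReal_nonneg)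
    (fun x => ENNReal.toReal_nonneg)
    (fun x => ENNReal.toReal_mono (by simp) (hu1 x))
    (fun x => ENNReal.toReal_mono (by simp) (hv1 x))
    ?_ ?_ ?_
  · have fin : ∀ {p : ℝ≥0∞}, p ≤ 1 → p ≠ ⊤ := fun hp => (hp.trans_lt ENNReal.one_lt_top).ne
    simp only [ENNReal.ofReal_toReal (fin (hu1 _)), ENNReal.ofReal_toReal (fin (hv1 _)),
      ENNReal.ofReal_toReal (fin (min_le_right _ _))] at key
    have k2 := (amgm_ennreal ht hs hts _ _).trans key
    simp only [div_eq_mul_inv] at k2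
    rw [lintegral_mul_const _ hu, lintegral_mul_const _ hv] at k2
    simp only [← div_eq_mul_inv] at k2
    rw [hdiv] at k2
    have k3 := k2.trans (lintegral_mono fun x => min_le_left _ _)
    simp only [div_eq_mul_inv] at k3
    rw [lintegral_mul_const _ hw] at k3
    exact (ENNReal.mul_le_mul_iff_left (by simp [hct]) (by simp [hc0])).1 k3
  · exact exists_lt_normalized ha0 hub
  · exact exists_lt_normalized hb0 hvb
  · intro x y
    rw [ENNReal.toReal_rpow, ENNReal.toReal_rpow, ← ENNReal.toReal_mul]
    refine ENNReal.toReal_mono (by simp) (le_min ?_ ?_)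
    · rw [hdiv]
      exact ENNReal.div_le_div_right (h x y) c
    · calc _ ≤ (1 : ℝ≥0∞) ^ t * 1 ^ s := by
            gcongr
            · exact hu1 x
            · exact hv1 y
        _ = 1 := by simp

lemma pl_real : PLProp (volume : Measure ℝ) := by
  intro t s ht hs hts u v w hu hv hw h
  by_cases hu0 : ∫⁻ x, u x = 0
  · simp [hu0, ht]
  by_cases hv0 : ∫⁻ x, v x = 0
  · simp [hv0, hs]
  have lim : ∀ f : ℝ → ℝ≥0∞, Measurable f →
      Tendsto (fun n : ℕ => ∫⁻ x, min (f x) n) atTop (𝓝 (∫⁻ x, f x)) := by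
    intro f hf
    refine lintegral_tendsto_of_tendsto_of_monotone (fun n => (hf.min measurable_const).aemeasurable)
      (ae_of_all _ fun x m n hmn => min_le_min le_rfl (by exact_mod_cast hmn))
      (ae_of_all _ fun x => ?_)
    have := (tendsto_const_nhds (x := f x)).min (ENNReal.tendsto_nat_nhds_top)
    simpa using this
  have l1 := ((ENNReal.continuous_rpow_const (y := t)).tendsto _).comp (lim u hu)
  have l2 := ((ENNReal.continuous_rpow_const (y := s)).tendsto _).comp (lim v hv)
  have l3 := ENNReal.Tendsto.mul l1 (Or.inl (by simp [hu0, ht.not_gt])) l2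
    (Or.inl (by simp [hv0, hs.not_gt]))
  refine le_of_tendsto l3 (Eventually.of_forall fun n => ?_)
  refine pl_bdd ht hs hts (hu.min measurable_const) (hv.min measurable_const) hw ?_ ?_ ?_
  · exact ((iSup_le fun x => min_le_right _ _).trans_lt (ENNReal.natCast_lt_top n)).ne
  · exact ((iSup_le fun x => min_le_right _ _).trans_lt (ENNReal.natCast_lt_top n)).ne
  · intro x y
    refine le_trans ?_ (h x y)
    gcongr <;> exact min_le_left _ _

lemma PLProp.prod {E F : Type*} [AddCommMonoid E] [Module ℝ E] [MeasurableSpace E]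
    [AddCommMonoid F] [Module ℝ F] [MeasurableSpace F] {μ : Measure E} {ν : Measure F}
    [SFinite ν] (h1 : PLProp μ) (h2 : PLProp ν) : PLProp (μ.prod ν) := by
  intro t s ht hs hts u v w hu hv hw h
  rw [lintegral_prod _ hu.aemeasurable, lintegral_prod _ hv.aemeasurable,
    lintegral_prod _ hw.aemeasurable]
  refine h1 t s ht hs hts _ _ _ hu.lintegral_prod_right' hv.lintegral_prod_right'
    hw.lintegral_prod_right' fun x y => ?_
  exact h2 t s ht hs hts _ _ _ (hu.comp measurable_prodMk_left) (hv.comp measurable_prodMk_left)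
    (hw.comp measurable_prodMk_left) fun p q => h (x, p) (y, q)

lemma PLProp.of_equiv {E F : Type*} [AddCommMonoid E] [Module ℝ E] [MeasurableSpace E]
    [AddCommMonoid F] [Module ℝ F] [MeasurableSpace F] {μ : Measure E} {ν : Measure F}
    (h1 : PLProp μ) (e : E ≃ᵐ F) (he : MeasurePreserving e μ ν)
    (hl : ∀ (t s : ℝ) (x y : E), e (t • x + s • y) = t • e x + s • e y) : PLProp ν := by
  intro t s ht hs hts u v w hu hv hw h
  rw [← he.lintegral_comp hu, ← he.lintegral_comp hv, ← he.lintegral_comp hw]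
  refine h1 t s ht hs hts _ _ _ (hu.comp e.measurable) (hv.comp e.measurable)
    (hw.comp e.measurable) fun x y => ?_
  simp only [hl]
  exact h _ _

lemma pl_pi (n : ℕ) : PLProp (volume : Measure (Fin n → ℝ)) := by
  induction n with
  | zero =>
    intro t s ht hs hts u v w hu hv hw h
    rw [volume_pi, Measure.pi_of_empty]
    simp only [lintegral_dirac]
    convert h default default
  | succ n ih =>
    have := pl_real.prod ih
    refine this.of_equiv (MeasurableEquiv.piFinSuccAbove (fun _ => ℝ) 0).symm
      (volume_preserving_piFinSuccAbove (fun _ => ℝ) 0).symm ?_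
    intro t s x y
    ext i
    refine Fin.cases ?_ (fun j => ?_) i <;> simp [MeasurableEquiv.piFinSuccAbove]

lemma pl_euclidean (n : ℕ) : PLProp (volume : Measure (EuclideanSpace ℝ (Fin n))) := by
  refine (pl_pi n).of_equiv (MeasurableEquiv.toLp 2 (Fin n → ℝ))
    (EuclideanSpace.volume_preserving_symm_measurableEquiv_toLp (Fin n)).symm ?_
  intro t s x y
  ext i
  simp

end PL

section LSI

open scoped ENNReal NNReal Topology
open Filter

variable {d : ℕ}

/-- The quartic potential. -/
noncomputable def Vp (x : EuclideanSpace ℝ (Fin d)) : ℝ := ‖x‖ ^ 4 / 4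

/-- Strongly convex modification of the quartic potential. -/
noncomputable def Wp (x : EuclideanSpace ℝ (Fin d)) : ℝ := ‖x‖ ^ 2 / 2 + (max (‖x‖ ^ 2 - 1) 0) ^ 2 / 4

lemma Wp_conv {t s : ℝ} (ht : 0 < t) (hs : 0 < s) (hts : t + s = 1)
    (x y : EuclideanSpace ℝ (Fin d)) :
    Wp (t • x + s • y) + t * s / 2 * ‖x - y‖ ^ 2 ≤ t * Wp x + s * Wp y := by
  have e1 : ‖t • x + s • y‖ ^ 2 = t * ‖x‖ ^ 2 + s * ‖y‖ ^ 2 - t * s * ‖x - y‖ ^ 2 := by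
    rw [norm_add_sq_real, norm_sub_sq_real, norm_smul, norm_smul, inner_smul_left,
      inner_smul_right, Real.norm_of_nonneg ht.le, Real.norm_of_nonneg hs.le]
    obtain rfl : s = 1 - t := by linarith
    simp only [conj_trivial]
    ring
  have h0 : 0 ≤ t * s * ‖x - y‖ ^ 2 := by positivity
  have e2 : max (‖t • x + s • y‖ ^ 2 - 1) 0 ≤
      t * max (‖x‖ ^ 2 - 1) 0 + s * max (‖y‖ ^ 2 - 1) 0 := by
    have a1 := mul_le_mul_of_nonneg_left (le_max_left (‖x‖ ^ 2 - 1) 0) ht.le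
    have a2 := mul_le_mul_of_nonneg_left (le_max_left (‖y‖ ^ 2 - 1) 0) hs.le
    refine max_le ?_ (by positivity)
    rw [e1]; linarith
  have hn : 0 ≤ max (‖t • x + s • y‖ ^ 2 - 1) 0 := le_max_right _ _
  have e3 := pow_le_pow_left₀ hn e2 2
  unfold Wp
  set p := max (‖x‖ ^ 2 - 1) 0
  set q := max (‖y‖ ^ 2 - 1) 0
  have e4 : (t * p + s * q) ^ 2 ≤ t * p ^ 2 + s * q ^ 2 := by
    obtain rfl : s = 1 - t := by linarith
    nlinarith [mul_nonneg (mul_nonneg ht.le hs.le) (sq_nonneg (p - q))]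
  linarith

lemma Vp_le_Wp (x : EuclideanSpace ℝ (Fin d)) : Vp x ≤ Wp x := by
  unfold Vp Wp
  have : ‖x‖ ^ 4 = (‖x‖ ^ 2) ^ 2 := by ring
  rw [this]
  have h0 : 0 ≤ ‖x‖ ^ 2 := by positivity
  rcases le_total (‖x‖ ^ 2) 1 with h | h
  · rw [max_eq_right (by linarith)]; nlinarith
  · rw [max_eq_left (by linarith)]; nlinarith

lemma Wp_le_Vp (x : EuclideanSpace ℝ (Fin d)) : Wp x ≤ Vp x + 1 / 4 := by
  unfold Vp Wp
  have : ‖x‖ ^ 4 = (‖x‖ ^ 2) ^ 2 := by ring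
  rw [this]
  have h0 : 0 ≤ ‖x‖ ^ 2 := by positivity
  rcases le_total (‖x‖ ^ 2) 1 with h | h
  · rw [max_eq_right (by linarith)]; nlinarith [sq_nonneg (‖x‖ ^ 2 - 1)]
  · rw [max_eq_left (by linarith)]; nlinarith

@[fun_prop] lemma Vp_cont : Continuous (Vp (d := d)) := by unfold Vp; fun_prop
@[fun_prop] lemma Wp_cont : Continuous (Wp (d := d)) := by unfold Wp; fun_prop

/-- Unnormalised Gibbs measure. -/
noncomputable def unG (V : EuclideanSpace ℝ (Fin d) → ℝ) : Measure (EuclideanSpace ℝ (Fin d)) :=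
  volume.withDensity fun x => ENNReal.ofReal (Real.exp (-V x))

lemma unG_univ (V : EuclideanSpace ℝ (Fin d) → ℝ) :
    unG V Set.univ = ∫⁻ x, ENNReal.ofReal (Real.exp (-V x)) := by
  simp [unG]

lemma finite_unG_Wp : IsFiniteMeasure (unG (Wp (d := d))) := by
  refine ⟨?_⟩
  rw [unG_univ]
  have h := GaussianFourier.integrable_cexp_neg_mul_sq_norm_add (b := (1 / 2 : ℂ))
    (V := EuclideanSpace ℝ (Fin d)) (by norm_num) 0 0
  have h2 := h.norm.lintegral_lt_top
  refine lt_of_le_of_lt (lintegral_mono fun x => ?_) h2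
  refine ENNReal.ofReal_le_ofReal ?_
  rw [Complex.norm_exp, Real.exp_le_exp]
  have : (-(1 / 2 : ℂ) * (‖x‖ : ℂ) ^ 2 + 0 * ((inner ℝ (0 : EuclideanSpace ℝ (Fin d)) x : ℝ) : ℂ)).re
      = -(‖x‖ ^ 2 / 2) := by
    have : (-(1 / 2 : ℂ) * (‖x‖ : ℂ) ^ 2 +
      0 * ((inner ℝ (0 : EuclideanSpace ℝ (Fin d)) x : ℝ) : ℂ)) = ((-(‖x‖ ^ 2 / 2) : ℝ) : ℂ) := by
      push_cast; ring
    rw [this, Complex.ofReal_re]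
  refine le_of_le_of_eq ?_ this.symm
  unfold Wp
  have : 0 ≤ (max (‖x‖ ^ 2 - 1) 0) ^ 2 / 4 := by positivity
  linarith

lemma unG_mono {V W : EuclideanSpace ℝ (Fin d) → ℝ} (h : ∀ x, V x ≤ W x) : unG W ≤ unG V := by
  refine withDensity_mono (ae_of_all _ fun x => ?_)
  exact ENNReal.ofReal_le_ofReal (Real.exp_le_exp.2 (by linarith [h x]))

lemma unG_Vp_le : unG (Vp (d := d)) ≤ ENNReal.ofReal (Real.exp (1 / 4)) • unG Wp := by
  unfold unG
  rw [← withDensity_smul _ (by fun_prop)]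
  refine withDensity_mono (ae_of_all _ fun x => ?_)
  simp only [Pi.smul_apply, smul_eq_mul]
  rw [← ENNReal.ofReal_mul (Real.exp_pos _).le, ← Real.exp_add]
  exact ENNReal.ofReal_le_ofReal (Real.exp_le_exp.2 (by linarith [Wp_le_Vp x]))

lemma finite_unG_Vp : IsFiniteMeasure (unG (Vp (d := d))) := by
  have := finite_unG_Wp (d := d)
  refine ⟨(unG_Vp_le Set.univ).trans_lt ?_⟩
  simp only [Measure.smul_apply, smul_eq_mul]
  exact ENNReal.mul_lt_top ENNReal.ofReal_lt_top (measure_lt_top _ _)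

lemma unG_ne_zero {V : EuclideanSpace ℝ (Fin d) → ℝ} (hV : Continuous V) :
    unG V Set.univ ≠ 0 := by
  rw [unG_univ]
  intro h
  rw [lintegral_eq_zero_iff (by fun_prop)] at h
  have h2 : ∀ᵐ x : EuclideanSpace ℝ (Fin d), False := by
    filter_upwards [h] with x hx
    simp only [Pi.zero_apply, ENNReal.ofReal_eq_zero] at hx
    linarith [Real.exp_pos (-V x)]
  rw [ae_iff] at h2
  simp at h2
  exact NeZero.ne _ h2

lemma integrable_of_bdd {μ : Measure (EuclideanSpace ℝ (Fin d))} [IsFiniteMeasure μ]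
    {h : EuclideanSpace ℝ (Fin d) → ℝ} (hm : Continuous h) {C : ℝ} (hC : ∀ x, |h x| ≤ C) :
    Integrable h μ :=
  Integrable.of_bound hm.aestronglyMeasurable C (ae_of_all _ hC)

/-- Prékopa-Leindler consequence for the measure with potential `Wp`. -/
lemma pl_apply {g N : EuclideanSpace ℝ (Fin d) → ℝ} (hg : Continuous g) (hN : Continuous N)
    {M : ℝ}
    (hT : ∀ z h, g (z + h) ≤ g z + N z * ‖h‖ + M * ‖h‖ ^ 2) {t s : ℝ} (ht : 0 < t) (hs : 0 < s)
    (hts : t + s = 1) (hs4 : s ≤ 1 / 4) (hsM : s * M ≤ 1 / 8) :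
    (∫⁻ x, ENNReal.ofReal (Real.exp (g x / t)) ∂(unG Wp)) ^ t * (unG (Wp (d := d)) Set.univ) ^ s ≤
      ∫⁻ x, ENNReal.ofReal (Real.exp (g x + s * N x ^ 2)) ∂(unG Wp) := by
  rw [unG_univ]
  unfold unG
  rw [lintegral_withDensity_eq_lintegral_mul _ (by fun_prop) (by fun_prop),
    lintegral_withDensity_eq_lintegral_mul _ (by fun_prop) (by fun_prop)]
  refine pl_euclidean d t s ht hs hts _ _ _ ?_ (by fun_prop) ?_ ?_
  · exact Measurable.mul (by fun_prop) (by fun_prop)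
  · exact Measurable.mul (by fun_prop) (by fun_prop)
  intro x y
  simp only [Pi.mul_apply]
  rw [← ENNReal.ofReal_mul (Real.exp_pos _).le, ← ENNReal.ofReal_mul (Real.exp_pos _).le,
    ENNReal.ofReal_rpow_of_nonneg (by positivity) ht.le,
    ENNReal.ofReal_rpow_of_nonneg (by positivity) hs.le,
    ← Real.exp_add, ← Real.exp_add, ← Real.exp_mul, ← Real.exp_mul,
    ← ENNReal.ofReal_mul (Real.exp_pos _).le, ← Real.exp_add]
  refine ENNReal.ofReal_le_ofReal (Real.exp_le_exp.2 ?_)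
  have hc := Wp_conv ht hs hts x y
  set z := t • x + s • y with hz
  have hx : x = z + s • (x - y) := by
    rw [hz]
    obtain rfl : t = 1 - s := by linarith
    module
  have h1 := hT z (s • (x - y))
  rw [← hx, norm_smul, Real.norm_of_nonneg hs.le] at h1
  set D := ‖x - y‖
  have e : (-Wp x + g x / t) * t = g x - t * Wp x := by field_simp; ring
  rw [e]
  have key : N z * D + (M * s - t / 2) * D ^ 2 ≤ N z ^ 2 := by
    nlinarith [sq_nonneg (N z - D / 2), sq_nonneg D, mul_nonneg (sub_nonneg.2 hsM) (sq_nonneg D),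
      mul_nonneg (sub_nonneg.2 hs4) (sq_nonneg D)]
  have := mul_le_mul_of_nonneg_left key hs.le
  nlinarith

lemma lsi_core {g N : EuclideanSpace ℝ (Fin d) → ℝ} (hg : Continuous g) (hN : Continuous N)
    {M G C : ℝ} (hC : ∀ x, |g x| ≤ C) (hNG : ∀ x, |N x| ≤ G)
    (hT : ∀ z h, g (z + h) ≤ g z + N z * ‖h‖ + M * ‖h‖ ^ 2) :
    ∫ x, g x * Real.exp (g x) ∂(unG Wp) -
      (∫ x, Real.exp (g x) ∂(unG Wp)) *
        Real.log ((∫ x, Real.exp (g x) ∂(unG Wp)) / (unG (Wp (d := d))).real Set.univ) ≤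
      2 * ∫ x, N x ^ 2 * Real.exp (g x) ∂(unG Wp) := by
  have hfin := finite_unG_Wp (d := d)
  set ν := unG (Wp (d := d)) with hν
  have hne : ν Set.univ ≠ 0 := unG_ne_zero Wp_cont
  have hneν : NeZero ν := ⟨fun h => hne (by rw [h]; simp)⟩
  have hC0 : 0 ≤ C := (abs_nonneg _).trans (hC 0)
  have hG0 : 0 ≤ G := (abs_nonneg _).trans (hNG 0)
  have hNG2 : ∀ x, N x ^ 2 ≤ G ^ 2 := fun x => sq_le_sq' (by linarith [abs_le.1 (hNG x)])
    (abs_le.1 (hNG x)).2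
  -- choice of s
  obtain ⟨s, hs, hs4, hsM, hsG⟩ : ∃ s : ℝ, 0 < s ∧ s ≤ 1 / 4 ∧ s * M ≤ 1 / 8 ∧ s * G ^ 2 ≤ 1 := by
    refine ⟨1 / (4 + 8 * |M| + G ^ 2), by positivity, ?_, ?_, ?_⟩
    · apply one_div_le_one_div_of_le (by norm_num)
      have := abs_nonneg M
      nlinarith
    · rw [div_mul_eq_mul_div, div_le_iff₀ (by positivity)]
      nlinarith [le_abs_self M, sq_nonneg G]
    · rw [div_mul_eq_mul_div, div_le_iff₀ (by positivity)]
      nlinarith [abs_nonneg M]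
  set t := 1 - s with htdef
  have ht : 0 < t := by linarith
  have hts : t + s = 1 := by linarith
  have hexpb : ∀ x, Real.exp (g x) ≤ Real.exp C := fun x =>
    Real.exp_le_exp.2 (abs_le.1 (hC x)).2
  have i1 : Integrable (fun x => Real.exp (g x)) ν :=
    integrable_of_bdd (by fun_prop) (C := Real.exp C) fun x => by
      rw [abs_of_pos (Real.exp_pos _)]; exact hexpb x
  have i2 : Integrable (fun x => g x * Real.exp (g x)) ν :=
    integrable_of_bdd (by fun_prop) (C := C * Real.exp C) fun x => by
      rw [abs_mul, abs_of_pos (Real.exp_pos _)]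
      exact mul_le_mul (hC x) (hexpb x) (Real.exp_pos _).le hC0
  have i3 : Integrable (fun x => N x ^ 2 * Real.exp (g x)) ν :=
    integrable_of_bdd (by fun_prop) (C := G ^ 2 * Real.exp C) fun x => by
      rw [abs_mul, abs_of_pos (Real.exp_pos _), abs_of_nonneg (sq_nonneg _)]
      exact mul_le_mul (hNG2 x) (hexpb x) (Real.exp_pos _).le (sq_nonneg _)
  have i4 : Integrable (fun x => Real.exp (g x / t)) ν :=
    integrable_of_bdd (by fun_prop) (C := Real.exp (C / t)) fun x => by
      rw [abs_of_pos (Real.exp_pos _)]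
      exact Real.exp_le_exp.2 (div_le_div_of_nonneg_right (abs_le.1 (hC x)).2 ht.le)
  have i5 : Integrable (fun x => Real.exp (g x + s * N x ^ 2)) ν :=
    integrable_of_bdd (by fun_prop) (C := Real.exp (C + s * G ^ 2)) fun x => by
      rw [abs_of_pos (Real.exp_pos _)]
      exact Real.exp_le_exp.2 (add_le_add (abs_le.1 (hC x)).2
        (mul_le_mul_of_nonneg_left (hNG2 x) hs.le))
  have hPL := pl_apply hg hN hT ht hs hts hs4 hsM
  rw [← hν, ← ofReal_integral_eq_lintegral_ofReal i4 (ae_of_all _ fun x => (Real.exp_pos _).le),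
    ← ofReal_integral_eq_lintegral_ofReal i5 (ae_of_all _ fun x => (Real.exp_pos _).le),
    ← ofReal_measureReal (μ := ν) (s := Set.univ)] at hPL
  have pA : 0 < ∫ x, Real.exp (g x) ∂ν := integral_exp_pos i1
  have pAt : 0 < ∫ x, Real.exp (g x / t) ∂ν := integral_exp_pos i4
  have pB : 0 < ∫ x, Real.exp (g x + s * N x ^ 2) ∂ν := integral_exp_pos i5
  have pZ : 0 < ν.real Set.univ := by
    rw [measureReal_def]; exact ENNReal.toReal_pos hne (measure_ne_top _ _)
  set A := ∫ x, Real.exp (g x) ∂ν with hA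
  set At := ∫ x, Real.exp (g x / t) ∂ν with hAt
  set B := ∫ x, Real.exp (g x + s * N x ^ 2) ∂ν with hB
  set Z := ν.real Set.univ with hZ
  set m := ∫ x, g x * Real.exp (g x) ∂ν with hm
  set I := ∫ x, N x ^ 2 * Real.exp (g x) ∂ν with hI
  rw [ENNReal.ofReal_rpow_of_nonneg pAt.le ht.le, ENNReal.ofReal_rpow_of_nonneg pZ.le hs.le,
    ← ENNReal.ofReal_mul (by positivity), ENNReal.ofReal_le_ofReal_iff pB.le] at hPL
  have hlog := Real.log_le_log (by positivity) hPL
  rw [Real.log_mul (by positivity) (by positivity), Real.log_rpow pAt, Real.log_rpow pZ] at hlog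
  -- Jensen
  have hJ : Real.log A + s / t * (m / A) ≤ Real.log At := by
    set c := s / t * (m / A) with hc
    rw [← Real.log_exp c, ← Real.log_mul pA.ne' (Real.exp_pos _).ne']
    refine Real.log_le_log (by positivity) ?_
    have e1 : A * Real.exp c = ∫ x, (Real.exp c * (1 - c) * Real.exp (g x) +
        Real.exp c * (s / t) * (g x * Real.exp (g x))) ∂ν := by
      rw [integral_add (i1.const_mul _) (i2.const_mul _), integral_const_mul, integral_const_mul,
        ← hA, ← hm, hc]
      field_simp
      ring
    rw [e1]
    refine integral_mono ((i1.const_mul _).add (i2.const_mul _)) i4 fun x => ?_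
    have e2 : Real.exp (g x / t) = Real.exp (g x) * Real.exp c * Real.exp (s / t * g x - c) := by
      rw [← Real.exp_add, ← Real.exp_add]
      congr 1
      have : s = 1 - t := by linarith
      rw [this]; field_simp; ring
    have e3 := Real.add_one_le_exp (s / t * g x - c)
    have e4 := mul_le_mul_of_nonneg_left e3 (mul_pos (Real.exp_pos (g x)) (Real.exp_pos c)).le
    simp only
    rw [e2]
    linarith
  have hBA : B ≤ A + 2 * s * I := by
    rw [hA, hI, ← integral_const_mul, ← integral_add i1 (i3.const_mul _)]
    refine integral_mono i5 (i1.add (i3.const_mul _)) fun x => ?_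
    have h0 : 0 ≤ s * N x ^ 2 := by positivity
    have h1 : s * N x ^ 2 ≤ 1 := (mul_le_mul_of_nonneg_left (hNG2 x) hs.le).trans hsG
    have h2 := Real.abs_exp_sub_one_le (x := s * N x ^ 2) (by rwa [abs_of_nonneg h0])
    rw [abs_of_nonneg h0] at h2
    have h3 := (abs_le.1 h2).2
    simp only
    rw [Real.exp_add]
    nlinarith [Real.exp_pos (g x)]
  have hlB : Real.log B ≤ Real.log A + (B - A) / A := by
    have := Real.log_le_sub_one_of_pos (div_pos pB pA)
    rw [Real.log_div pB.ne' pA.ne'] at this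
    rw [sub_div, div_self pA.ne']
    linarith
  have h5 := mul_le_mul_of_nonneg_left hJ ht.le
  have e6 : t * (Real.log A + s / t * (m / A)) = t * Real.log A + s * (m / A) := by
    field_simp
  rw [e6] at h5
  have h7 : (B - A) / A ≤ s * (2 * I / A) := by
    rw [← mul_div_assoc]
    exact div_le_div_of_nonneg_right (by linarith) pA.le
  have h8 : s * (m / A + Real.log Z - Real.log A) ≤ s * (2 * I / A) := by
    rw [htdef] at h5 hlog
    nlinarith
  have h9 := le_of_mul_le_mul_left h8 hs
  rw [Real.log_div pA.ne' pZ.ne']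
  have h10 := mul_le_mul_of_nonneg_left h9 pA.le
  have e11 : A * (m / A + Real.log Z - Real.log A) = m + A * Real.log Z - A * Real.log A := by
    field_simp
  have e12 : A * (2 * I / A) = 2 * I := by field_simp
  rw [e11, e12] at h10
  linarith

end LSI

section Final

open scoped ENNReal NNReal Topology
open Filter

variable {d : ℕ}

lemma fderiv_sq_le (f : EuclideanSpace ℝ (Fin d) → ℝ) (x : EuclideanSpace ℝ (Fin d)) :
    ‖fderiv ℝ f x‖ ^ 2 ≤ gradSq f x := by
  have h0 : 0 ≤ gradSq f x := Finset.sum_nonneg fun i _ => sq_nonneg _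
  suffices h : ‖fderiv ℝ f x‖ ≤ Real.sqrt (gradSq f x) by
    calc ‖fderiv ℝ f x‖ ^ 2 ≤ Real.sqrt (gradSq f x) ^ 2 :=
          pow_le_pow_left₀ (norm_nonneg _) h 2
      _ = _ := Real.sq_sqrt h0
  refine ContinuousLinearMap.opNorm_le_bound _ (Real.sqrt_nonneg _) fun h => ?_
  have e : fderiv ℝ f x h = ∑ i, pd i f x * h i := by
    conv_lhs => rw [← (EuclideanSpace.basisFun (Fin d) ℝ).sum_repr h]
    simp [pd, mul_comm]
  rw [e, Real.norm_eq_abs]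
  refine abs_le_of_sq_le_sq ?_ (by positivity)
  rw [mul_pow, Real.sq_sqrt h0, EuclideanSpace.real_norm_sq_eq]
  exact Finset.sum_mul_sq_le_sq_mul_sq _ _ _

lemma gradSq_cont {f : EuclideanSpace ℝ (Fin d) → ℝ} (hf : ContDiff ℝ (⊤ : ℕ∞) f) :
    Continuous (gradSq f) := by
  have : Continuous (fderiv ℝ f) := hf.continuous_fderiv (by simp)
  unfold gradSq pd
  fun_prop

lemma gradSq_bdd {f : EuclideanSpace ℝ (Fin d) → ℝ} (hf : ContDiff ℝ (⊤ : ℕ∞) f)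
    (hc : HasCompactSupport f) : ∃ C, ∀ x, |gradSq f x| ≤ C := by
  have h : HasCompactSupport (gradSq f) := by
    have := (hc.fderiv ℝ).comp_left
      (g := fun L : EuclideanSpace ℝ (Fin d) →L[ℝ] ℝ => ∑ i, (L (EuclideanSpace.single i 1)) ^ 2)
      (by simp)
    exact this
  obtain ⟨C, hC⟩ := h.exists_bound_of_continuous (gradSq_cont hf)
  exact ⟨C, hC⟩

/-- Data for the function `log (f ^ 2 + ε)`. -/
lemma log_data {f : EuclideanSpace ℝ (Fin d) → ℝ} (hf : ContDiff ℝ (⊤ : ℕ∞) f)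
    (hc : HasCompactSupport f) {ε : ℝ} (hε : 0 < ε) :
    ∃ (N : EuclideanSpace ℝ (Fin d) → ℝ) (M G C : ℝ), Continuous N ∧
      (∀ x, |Real.log (f x ^ 2 + ε)| ≤ C) ∧ (∀ x, |N x| ≤ G) ∧
      (∀ z h, Real.log (f (z + h) ^ 2 + ε) ≤
        Real.log (f z ^ 2 + ε) + N z * ‖h‖ + M * ‖h‖ ^ 2) ∧
      (∀ x, N x ^ 2 * (f x ^ 2 + ε) ≤ 4 * gradSq f x) := by
  have hpos : ∀ x, 0 < f x ^ 2 + ε := fun x => by positivity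
  set g : EuclideanSpace ℝ (Fin d) → ℝ := fun x => Real.log (f x ^ 2 + ε) - Real.log ε with hg
  have hgs : ContDiff ℝ (⊤ : ℕ∞) g :=
    (((hf.pow 2).add contDiff_const).log fun x => (hpos x).ne').sub contDiff_const
  have hgc : HasCompactSupport g :=
    hc.comp_left (g := fun y : ℝ => Real.log (y ^ 2 + ε) - Real.log ε) (by simp)
  have hgd : ContDiff ℝ 1 (fderiv ℝ g) := hgs.fderiv_right (by norm_cast)
  obtain ⟨M, hM⟩ := ContDiff.lipschitzWith_of_hasCompactSupport (hgc.fderiv ℝ) hgd (by simp)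
  obtain ⟨G, hG⟩ := (hgc.fderiv ℝ).exists_bound_of_continuous hgd.continuous
  obtain ⟨C, hC⟩ := hgc.exists_bound_of_continuous hgs.continuous
  refine ⟨fun x => ‖fderiv ℝ g x‖, M, G, C + |Real.log ε|, hgd.continuous.norm, ?_, ?_, ?_, ?_⟩
  · intro x
    have := hC x
    have e : Real.log (f x ^ 2 + ε) = g x + Real.log ε := by simp [hg]
    rw [e]
    exact (abs_add_le _ _).trans (by gcongr; exact this)
  · intro x
    simpa using hG x
  · intro z h
    have hT : ‖g (z + h) - g z - fderiv ℝ g z (z + h - z)‖ ≤ (M * ‖h‖) * ‖z + h - z‖ := by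
      refine Convex.norm_image_sub_le_of_norm_fderiv_le' (𝕜 := ℝ) (s := Metric.closedBall z ‖h‖)
        (fun x _ => (hgs.differentiable (by simp)).differentiableAt) (fun x hx => ?_)
        (convex_closedBall _ _) (by simp) (by simp)
      have := hM.dist_le_mul x z
      rw [dist_eq_norm] at this
      exact this.trans (mul_le_mul_of_nonneg_left hx M.2)
    rw [add_sub_cancel_left] at hT
    have h1 := (abs_le.1 hT).2
    have h2 := (le_abs_self _).trans ((fderiv ℝ g z).le_opNorm h)
    have h3 : g (z + h) - g z = Real.log (f (z + h) ^ 2 + ε) - Real.log (f z ^ 2 + ε) := by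
      simp [hg]
    nlinarith
  · intro x
    have hd : HasFDerivAt g ((f x ^ 2 + ε)⁻¹ • ((2 * f x) • fderiv ℝ f x)) x := by
      have h1 := (hf.differentiable (by simp) x).hasFDerivAt
      have h2 := (((h1.pow 2).add_const ε).log (hpos x).ne').sub_const (Real.log ε)
      refine h2.congr_fderiv ?_
      simp
    beta_reduce
    rw [hd.fderiv, norm_smul, norm_smul, Real.norm_of_nonneg (inv_pos.2 (hpos x)).le]
    have h4 := fderiv_sq_le f x
    have h5 : ((f x ^ 2 + ε)⁻¹ * (‖2 * f x‖ * ‖fderiv ℝ f x‖)) ^ 2 * (f x ^ 2 + ε) =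
        4 * (f x ^ 2 / (f x ^ 2 + ε)) * ‖fderiv ℝ f x‖ ^ 2 := by
      rw [mul_pow, mul_pow, Real.norm_eq_abs, sq_abs]
      have := (hpos x).ne'
      field_simp
      ring
    rw [h5]
    have h6 : f x ^ 2 / (f x ^ 2 + ε) ≤ 1 := by
      rw [div_le_one (hpos x)]; linarith
    have h7 : 0 ≤ f x ^ 2 / (f x ^ 2 + ε) := by have := hpos x; positivity
    nlinarith [sq_nonneg ‖fderiv ℝ f x‖]

lemma gibbs_eq : gibbs (fun x : EuclideanSpace ℝ (Fin d) => ‖x‖ ^ 4 / 4) =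
    (unG (Vp (d := d)) Set.univ)⁻¹ • unG Vp := by
  rw [unG_univ]; rfl

lemma prob_gibbs : IsProbabilityMeasure (gibbs (fun x : EuclideanSpace ℝ (Fin d) => ‖x‖ ^ 4 / 4)) := by
  have := finite_unG_Vp (d := d)
  rw [gibbs_eq]
  refine ⟨?_⟩
  simp only [Measure.smul_apply, smul_eq_mul]
  exact ENNReal.inv_mul_cancel (unG_ne_zero Vp_cont) (measure_ne_top _ _)

lemma integral_gibbs (h : EuclideanSpace ℝ (Fin d) → ℝ) :
    ∫ x, h x ∂(gibbs fun x => ‖x‖ ^ 4 / 4) =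
      ((unG (Vp (d := d))).real Set.univ)⁻¹ * ∫ x, h x ∂(unG Vp) := by
  rw [gibbs_eq, integral_smul_measure, ENNReal.toReal_inv, smul_eq_mul, measureReal_def]

lemma ent_nonneg {a b : ℝ} (ha : 0 < a) (hb : 0 < b) :
    0 ≤ a * Real.log a - a * Real.log b - a + b := by
  have := Real.log_le_sub_one_of_pos (div_pos hb ha)
  rw [Real.log_div hb.ne' ha.ne'] at this
  have h2 := mul_le_mul_of_nonneg_left this ha.le
  have e : a * (b / a - 1) = b - a := by field_simp
  rw [e] at h2
  linarith

lemma lsi_eps {f : EuclideanSpace ℝ (Fin d) → ℝ} (hf : ContDiff ℝ (⊤ : ℕ∞) f)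
    (hc : HasCompactSupport f) {ε : ℝ} (hε : 0 < ε) :
    entropy (gibbs fun x => ‖x‖ ^ 4 / 4) (fun x => f x ^ 2 + ε) ≤
      8 * Real.exp (1 / 4) * ∫ x, gradSq f x ∂(gibbs fun x => ‖x‖ ^ 4 / 4) := by
  have hfW := finite_unG_Wp (d := d)
  have hfV := finite_unG_Vp (d := d)
  obtain ⟨N, M, G, C, hN, hC, hNG, hT, hNf⟩ := log_data hf hc hε
  have hpos : ∀ x, 0 < f x ^ 2 + ε := fun x => by positivity
  have hfc := hf.continuous
  have hgc : Continuous fun x => Real.log (f x ^ 2 + ε) :=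
    Continuous.log (by fun_prop) fun x => (hpos x).ne'
  have core := lsi_core hgc hN hC hNG hT
  simp only [Real.exp_log (hpos _)] at core
  obtain ⟨K, hK⟩ := hc.exists_bound_of_continuous hfc
  obtain ⟨K2, hK2⟩ := gradSq_bdd hf hc
  have hgrc := gradSq_cont hf
  have hK' : ∀ x, f x ^ 2 ≤ K ^ 2 := fun x => by
    have := hK x
    rw [Real.norm_eq_abs] at this
    exact sq_le_sq' (by linarith [(abs_le.1 this).1]) (abs_le.1 this).2
  have hC0 : 0 ≤ C := (abs_nonneg _).trans (hC 0)
  have iF : ∀ μ : Measure (EuclideanSpace ℝ (Fin d)), IsFiniteMeasure μ →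
      Integrable (fun x => f x ^ 2 + ε) μ := fun μ _ =>
    integrable_of_bdd (by fun_prop) (C := K ^ 2 + ε) fun x => by
      rw [abs_of_pos (hpos x)]; linarith [hK' x]
  have iL : ∀ μ : Measure (EuclideanSpace ℝ (Fin d)), IsFiniteMeasure μ →
      Integrable (fun x => Real.log (f x ^ 2 + ε) * (f x ^ 2 + ε)) μ := fun μ _ =>
    integrable_of_bdd (by fun_prop) (C := C * (K ^ 2 + ε)) fun x => by
      rw [abs_mul, abs_of_pos (hpos x)]
      exact mul_le_mul (hC x) (by linarith [hK' x]) (hpos x).le hC0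
  have iG : ∀ μ : Measure (EuclideanSpace ℝ (Fin d)), IsFiniteMeasure μ →
      Integrable (gradSq f) μ := fun μ _ => integrable_of_bdd hgrc hK2
  have hG0 : ∀ x, 0 ≤ gradSq f x := fun x => Finset.sum_nonneg fun i _ => sq_nonneg _
  have pZ : 0 < (unG (Wp (d := d))).real Set.univ := by
    rw [measureReal_def]; exact ENNReal.toReal_pos (unG_ne_zero Wp_cont) (measure_ne_top _ _)
  have pZV : 0 < (unG (Vp (d := d))).real Set.univ := by
    rw [measureReal_def]; exact ENNReal.toReal_pos (unG_ne_zero Vp_cont) (measure_ne_top _ _)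
  have posInt : ∀ μ : Measure (EuclideanSpace ℝ (Fin d)), IsFiniteMeasure μ →
      0 < μ.real Set.univ → 0 < ∫ x, (f x ^ 2 + ε) ∂μ := fun μ _ hμ => by
    have h1 : ∫ x, ε ∂μ ≤ ∫ x, (f x ^ 2 + ε) ∂μ :=
      integral_mono (integrable_const _) (iF μ inferInstance) fun x => by
        simp only; nlinarith [sq_nonneg (f x)]
    rw [integral_const, smul_eq_mul] at h1
    exact (mul_pos hμ hε).trans_le h1
  -- the gradient term
  have hI : ∫ x, N x ^ 2 * (f x ^ 2 + ε) ∂(unG Wp) ≤ 4 * ∫ x, gradSq f x ∂(unG Vp) := by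
    calc ∫ x, N x ^ 2 * (f x ^ 2 + ε) ∂(unG Wp) ≤ ∫ x, 4 * gradSq f x ∂(unG Wp) := by
          refine integral_mono_of_nonneg (ae_of_all _ fun x => ?_) ((iG _ hfW).const_mul 4)
            (ae_of_all _ hNf)
          have := hpos x
          simp only [Pi.zero_apply]
          positivity
      _ = 4 * ∫ x, gradSq f x ∂(unG Wp) := integral_const_mul _ _
      _ ≤ _ := by
          refine mul_le_mul_of_nonneg_left ?_ (by norm_num)
          exact integral_mono_measure (unG_mono Vp_le_Wp) (ae_of_all _ hG0) (iG _ hfV)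
  set A := ∫ x, (f x ^ 2 + ε) ∂(unG (Wp (d := d))) with hA
  set Z := (unG (Wp (d := d))).real Set.univ with hZ
  set AV := ∫ x, (f x ^ 2 + ε) ∂(unG (Vp (d := d))) with hAV
  set ZV := (unG (Vp (d := d))).real Set.univ with hZV
  have pA : 0 < A := posInt _ hfW pZ
  have pAV : 0 < AV := posInt _ hfV pZV
  set c := A / Z with hcdef
  have pc : 0 < c := div_pos pA pZ
  set D : EuclideanSpace ℝ (Fin d) → ℝ := fun x =>
    Real.log (f x ^ 2 + ε) * (f x ^ 2 + ε) - (Real.log c + 1) * (f x ^ 2 + ε) + c with hD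
  have hD0 : ∀ x, 0 ≤ D x := fun x => by
    have := ent_nonneg (hpos x) pc
    simp only [hD]; linarith
  have iD : ∀ μ : Measure (EuclideanSpace ℝ (Fin d)), IsFiniteMeasure μ → Integrable D μ :=
    fun μ hμ => ((iL μ hμ).sub ((iF μ hμ).const_mul _)).add (integrable_const _)
  have intD : ∀ μ : Measure (EuclideanSpace ℝ (Fin d)), IsFiniteMeasure μ →
      ∫ x, D x ∂μ = ∫ x, Real.log (f x ^ 2 + ε) * (f x ^ 2 + ε) ∂μ -
        (Real.log c + 1) * ∫ x, (f x ^ 2 + ε) ∂μ + μ.real Set.univ * c := fun μ hμ => by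
    simp only [hD]
    have i0 : Integrable (fun x => Real.log (f x ^ 2 + ε) * (f x ^ 2 + ε) -
        (Real.log c + 1) * (f x ^ 2 + ε)) μ := (iL μ hμ).sub ((iF μ hμ).const_mul _)
    rw [integral_add i0 (integrable_const _),
      integral_sub (iL μ hμ) ((iF μ hμ).const_mul _), integral_const_mul, integral_const,
      smul_eq_mul]
  have hDW : ∫ x, D x ∂(unG Wp) ≤ 8 * ∫ x, gradSq f x ∂(unG Vp) := by
    rw [intD _ hfW, ← hA, ← hZ]
    have : Z * c = A := by rw [hcdef]; field_simp
    rw [this]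
    linarith
  have hDV : ∫ x, D x ∂(unG Vp) ≤ Real.exp (1 / 4) * ∫ x, D x ∂(unG Wp) := by
    have h1 := integral_mono_measure (unG_Vp_le (d := d)) (ae_of_all _ hD0)
      ((iD _ hfW).smul_measure ENNReal.ofReal_ne_top)
    rwa [integral_smul_measure, ENNReal.toReal_ofReal (Real.exp_pos _).le, smul_eq_mul] at h1
  rw [intD _ hfV, ← hAV, ← hZV] at hDV
  have hfin := ent_nonneg pAV (mul_pos pZV pc)
  rw [Real.log_mul pZV.ne' pc.ne'] at hfin
  have tot : ∫ x, Real.log (f x ^ 2 + ε) * (f x ^ 2 + ε) ∂(unG Vp) -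
      AV * (Real.log AV - Real.log ZV) ≤
      Real.exp (1 / 4) * (8 * ∫ x, gradSq f x ∂(unG Vp)) := by
    have := mul_le_mul_of_nonneg_left hDW (Real.exp_pos (1 / 4)).le
    linarith
  unfold entropy
  rw [integral_gibbs, integral_gibbs, integral_gibbs, ← hAV, ← hZV,
    Real.log_mul (inv_pos.2 pZV).ne' pAV.ne', Real.log_inv]
  simp only [mul_comm _ (Real.log _)] at tot ⊢
  have := mul_le_mul_of_nonneg_left tot (inv_pos.2 pZV).le
  linarith

lemma lsi_zero {f : EuclideanSpace ℝ (Fin d) → ℝ} (hf : ContDiff ℝ (⊤ : ℕ∞) f)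
    (hc : HasCompactSupport f) :
    entropy (gibbs fun x => ‖x‖ ^ 4 / 4) (fun x => f x ^ 2) ≤
      8 * Real.exp (1 / 4) * ∫ x, gradSq f x ∂(gibbs fun x => ‖x‖ ^ 4 / 4) := by
  have hp := prob_gibbs (d := d)
  set μ := gibbs (fun x : EuclideanSpace ℝ (Fin d) => ‖x‖ ^ 4 / 4) with hμ
  have hfc := hf.continuous
  obtain ⟨K, hK⟩ := hc.exists_bound_of_continuous hfc
  have hK' : ∀ x, f x ^ 2 ≤ K ^ 2 := fun x => by
    have := hK x
    rw [Real.norm_eq_abs] at this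
    exact sq_le_sq' (by linarith [(abs_le.1 this).1]) (abs_le.1 this).2
  have lim : ∀ φ : ℝ → ℝ, Continuous φ →
      Tendsto (fun ε => ∫ x, φ (f x ^ 2 + ε) ∂μ) (𝓝[>] 0) (𝓝 (∫ x, φ (f x ^ 2) ∂μ)) := by
    intro φ hφ
    obtain ⟨B, hB⟩ := (isCompact_Icc (a := (0 : ℝ)) (b := K ^ 2 + 1)).exists_bound_of_continuousOn
      hφ.continuousOn
    refine tendsto_integral_filter_of_dominated_convergence (fun _ => B)
      (Eventually.of_forall fun ε => (by fun_prop : Continuous _).aestronglyMeasurable) ?_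
      (integrable_const _) (ae_of_all _ fun x => ?_)
    · filter_upwards [Ioo_mem_nhdsGT (zero_lt_one' ℝ)] with ε hε
      refine ae_of_all _ fun x => hB _ ⟨?_, ?_⟩
      · have := hε.1; positivity
      · linarith [hK' x, hε.2]
    · have : Continuous fun ε => φ (f x ^ 2 + ε) := by fun_prop
      have h2 := this.tendsto 0
      simp only [add_zero] at h2
      exact h2.mono_left nhdsWithin_le_nhds
  have l1 := lim _ Real.continuous_mul_log
  have l2 := lim _ continuous_id
  have l3 := (Real.continuous_mul_log.tendsto _).comp l2
  have l4 := l1.sub l3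
  refine le_of_tendsto l4 ?_
  filter_upwards [self_mem_nhdsWithin] with ε hε
  exact lsi_eps hf hc hε

end Final

/-- Dimension-free logarithmic Sobolev inequality for the quartic
(Subbotin) measure `μ(dx) ∝ exp(-|x|⁴/4) dx`: `Ent_μ(f²) ≤ 3√3·e ∫ |∇f|² dμ`. -/
theorem lsi_quartic {d : ℕ} (hd : 1 ≤ d) :
    ∀ f : EuclideanSpace ℝ (Fin d) → ℝ, ContDiff ℝ (⊤ : ℕ∞) f → HasCompactSupport f →
      entropy (gibbs fun x => ‖x‖ ^ 4 / 4) (fun x => f x ^ 2) ≤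
        3 * Real.sqrt 3 * Real.exp 1 *
          ∫ x, gradSq f x ∂(gibbs fun x => ‖x‖ ^ 4 / 4) := by
  intro f hf hc
  refine (lsi_zero hf hc).trans ?_
  refine mul_le_mul_of_nonneg_right ?_
    (integral_nonneg fun x => Finset.sum_nonneg fun i _ => sq_nonneg _)
  have h1 : (1.7 : ℝ) ≤ Real.sqrt 3 := Real.le_sqrt_of_sq_le (by norm_num)
  have h2 : (3 / 4 : ℝ) + 1 ≤ Real.exp (3 / 4) := Real.add_one_le_exp _
  have h3 : Real.exp 1 = Real.exp (3 / 4) * Real.exp (1 / 4) := by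
    rw [← Real.exp_add]; norm_num
  rw [h3, ← mul_assoc]
  refine mul_le_mul_of_nonneg_right ?_ (Real.exp_pos _).le
  nlinarith
end

section
/- Let d ≥ 1, ε > 0, V(x) = |x|⁴/4 on ℝ^d, so that Lg(x) = Δg(x) − |x|² x·∇g(x), and let a(x) = exp((ε/2)·arctan(|x|²)). Then for every x ∈ ℝ^d, −a(x)·L(a^{−1})(x) = ε(d + |x|⁴(d−4))/(1+|x|⁴)² − ε|x|⁴/(1+|x|⁴) − ε²|x|²/(1+|x|⁴)². -/
open Real MeasureTheory Finset Matrix Set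

lemma hasFDerivAt_radial {d : ℕ} {g : ℝ → ℝ} {g' : ℝ} (x : EuclideanSpace ℝ (Fin d))
    (hg : HasDerivAt g g' (‖x‖ ^ 2)) :
    HasFDerivAt (fun y : EuclideanSpace ℝ (Fin d) => g (‖y‖ ^ 2))
      (g' • (2 • (innerSL ℝ x))) x :=
  hg.comp_hasFDerivAt x (hasStrictFDerivAt_norm_sq x).hasFDerivAt

lemma pd_radial {d : ℕ} {g : ℝ → ℝ} {g' : ℝ} (i : Fin d) (x : EuclideanSpace ℝ (Fin d))
    (hg : HasDerivAt g g' (‖x‖ ^ 2)) :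
    pd i (fun y => g (‖y‖ ^ 2)) x = g' * (2 * x i) := by
  unfold pd
  rw [(hasFDerivAt_radial x hg).fderiv]
  simp [EuclideanSpace.inner_single_right]

lemma pd_radial_mul {d : ℕ} {g : ℝ → ℝ} {g' : ℝ} (i : Fin d) (x : EuclideanSpace ℝ (Fin d))
    (hg : HasDerivAt g g' (‖x‖ ^ 2)) :
    pd i (fun y => g (‖y‖ ^ 2) * y i) x = g' * 2 * x i ^ 2 + g (‖x‖ ^ 2) := by
  unfold pd
  have h2 : HasFDerivAt (fun y : EuclideanSpace ℝ (Fin d) => y i)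
      (EuclideanSpace.proj i : EuclideanSpace ℝ (Fin d) →L[ℝ] ℝ) x :=
    (EuclideanSpace.proj i : EuclideanSpace ℝ (Fin d) →L[ℝ] ℝ).hasFDerivAt
  have h3 := (hasFDerivAt_radial x hg).fun_mul h2
  rw [h3.fderiv]
  simp [EuclideanSpace.inner_single_right]
  ring

lemma hasDerivAt_g (ε s : ℝ) :
    HasDerivAt (fun s => (Real.exp (ε / 2 * Real.arctan s))⁻¹)
      (-(ε / 2) / (1 + s ^ 2) * (Real.exp (ε / 2 * Real.arctan s))⁻¹) s := by
  have h := (((Real.hasDerivAt_arctan s).const_mul (ε / 2)).exp).inv (Real.exp_ne_zero _)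
  refine h.congr_deriv ?_
  have := Real.exp_ne_zero (ε / 2 * Real.arctan s)
  have : 1 + s ^ 2 ≠ 0 := by positivity
  field_simp

lemma hasDerivAt_h (ε s : ℝ) :
    HasDerivAt (fun s => -ε / (1 + s ^ 2) * (Real.exp (ε / 2 * Real.arctan s))⁻¹)
      ((2 * s * ε + ε ^ 2 / 2) / (1 + s ^ 2) ^ 2 *
        (Real.exp (ε / 2 * Real.arctan s))⁻¹) s := by
  have h0 : 1 + s ^ 2 ≠ 0 := by positivity
  have h1 : HasDerivAt (fun s : ℝ => 1 + s ^ 2) (2 * s) s := by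
    simpa using (hasDerivAt_pow 2 s).const_add 1
  have h := ((hasDerivAt_const s (-ε)).div h1 h0).mul (hasDerivAt_g ε s)
  refine h.congr_deriv ?_
  try simp only [Pi.div_apply]
  field_simp
  ring

/-- Explicit computation of `-a L(a⁻¹)` for the quartic potential
`V(x) = |x|⁴/4` and the perturbation `a(x) = exp((ε/2) arctan(|x|²))`. -/
theorem arctan_perturbation {d : ℕ} (hd : 1 ≤ d) (ε : ℝ) (hε : 0 < ε)
    (x : EuclideanSpace ℝ (Fin d)) :
    -(Real.exp (ε / 2 * Real.arctan (‖x‖ ^ 2)) *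
        diffOp (fun y => ‖y‖ ^ 4 / 4)
          (fun y => (Real.exp (ε / 2 * Real.arctan (‖y‖ ^ 2)))⁻¹) x) =
      ε * ((d : ℝ) + ‖x‖ ^ 4 * ((d : ℝ) - 4)) / (1 + ‖x‖ ^ 4) ^ 2 -
        ε * ‖x‖ ^ 4 / (1 + ‖x‖ ^ 4) -
        ε ^ 2 * ‖x‖ ^ 2 / (1 + ‖x‖ ^ 4) ^ 2 := by
  have hV : ∀ i, pd i (fun y : EuclideanSpace ℝ (Fin d) => ‖y‖ ^ 4 / 4) x
      = ‖x‖ ^ 2 * x i := by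
    intro i
    have h : HasDerivAt (fun s : ℝ => s ^ 2 / 4) (‖x‖ ^ 2 / 2) (‖x‖ ^ 2) := by
      refine ((hasDerivAt_pow 2 (‖x‖ ^ 2)).div_const 4).congr_deriv ?_
      norm_num
      ring
    have h2 := pd_radial i x h
    simp only [← pow_mul] at h2
    norm_num at h2
    rw [h2]
    ring
  have hf : ∀ i (y : EuclideanSpace ℝ (Fin d)),
      pd i (fun y => (Real.exp (ε / 2 * Real.arctan (‖y‖ ^ 2)))⁻¹) y
      = -ε / (1 + (‖y‖ ^ 2) ^ 2) * (Real.exp (ε / 2 * Real.arctan (‖y‖ ^ 2)))⁻¹ * y i := by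
    intro i y
    rw [pd_radial i y (hasDerivAt_g ε _)]
    ring
  have hff := fun i : Fin d => pd_radial_mul i x (hasDerivAt_h ε _)
  have hn : ∑ i, x i ^ 2 = ‖x‖ ^ 2 := by
    simp [EuclideanSpace.norm_sq_eq]
  have e : Real.exp (ε / 2 * Real.arctan (‖x‖ ^ 2)) ≠ 0 := Real.exp_ne_zero _
  unfold diffOp lap
  simp only [hf, hV, hff]
  set E := Real.exp (ε / 2 * Real.arctan (‖x‖ ^ 2))
  have hs : ∀ c : ℝ, ∑ i, ‖x‖ ^ 2 * x i * (c * x i) = c * ‖x‖ ^ 2 * ‖x‖ ^ 2 := by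
    intro c
    rw [← hn, Finset.mul_sum]
    exact Finset.sum_congr rfl fun i _ => by ring
  rw [hs, Finset.sum_add_distrib, ← Finset.mul_sum, hn]
  simp only [Finset.sum_const, Finset.card_univ, Fintype.card_fin, nsmul_eq_mul]
  have h4 : (‖x‖ ^ 2) ^ 2 = ‖x‖ ^ 4 := by ring
  rw [h4]
  have h0 : 1 + ‖x‖ ^ 4 ≠ 0 := by positivity
  field_simp
  ring
end

section
/- Let d ≥ 1 be an integer and let ε be a real number with 0 < ε ≤ 8/(3√3(d+1)). Then for every real t ≥ 0 one has 2t⁴ − ε(d+1)t³ + 4t² − ε(d+5)t + 2 − ε² ≥ 0. -/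
open Real MeasureTheory Finset Matrix Set

/-- For `0 < ε ≤ 8/(3√3(d+1))`, the quartic
`2t⁴ - ε(d+1)t³ + 4t² - ε(d+5)t + 2 - ε²` is nonnegative on `[0, ∞)`. -/
theorem quartic_poly_nonneg (d : ℕ) (hd : 1 ≤ d) (ε : ℝ) (hε : 0 < ε)
    (hε' : ε ≤ 8 / (3 * Real.sqrt 3 * ((d : ℝ) + 1))) :
    ∀ t : ℝ, 0 ≤ t →
      0 ≤ 2 * t ^ 4 - ε * ((d : ℝ) + 1) * t ^ 3 + 4 * t ^ 2 - ε * ((d : ℝ) + 5) * t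
            + 2 - ε ^ 2 := by
  intro t ht
  obtain ⟨r, hr, hr0, hr3⟩ : ∃ r : ℝ, Real.sqrt 3 = r ∧ 0 < r ∧ r ^ 2 = 3 :=
    ⟨_, rfl, by positivity, Real.sq_sqrt (by norm_num)⟩
  rw [hr] at hε'
  have hd1 : (1 : ℝ) ≤ d := by exact_mod_cast hd
  rw [le_div_iff₀ (by positivity)] at hε'
  have ha : ε * ((d : ℝ) + 1) ≤ 8 * r / 9 := by
    have h1 : r * (ε * (3 * r * ((d : ℝ) + 1))) ≤ r * 8 :=
      mul_le_mul_of_nonneg_left hε' hr0.le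
    have h2 : r * (ε * (3 * r * ((d : ℝ) + 1))) = 9 * (ε * ((d : ℝ) + 1)) := by
      linear_combination (3 * ε * ((d : ℝ) + 1)) * hr3
    linarith
  have he : ε ≤ 4 * r / 9 := by nlinarith
  have he2 : ε ^ 2 ≤ 16 / 27 := by
    have : ε ^ 2 ≤ (4 * r / 9) ^ 2 := by gcongr
    have h3 : (4 * r / 9) ^ 2 = 16 / 27 := by linear_combination (16 / 81) * hr3
    linarith
  have hA : ε * ((d : ℝ) + 1) * (t ^ 3 + t) ≤ 8 * r / 9 * (t ^ 3 + t) := by gcongr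
  have hB : ε * (4 * t) ≤ 4 * r / 9 * (4 * t) := by gcongr
  have hP : 0 ≤ (r * t - 1) ^ 2 * (18 * t ^ 2 + 4 * (r * t) + 38) := by positivity
  have hE : (r * t - 1) ^ 2 * (18 * t ^ 2 + 4 * (r * t) + 38)
      = 27 * (2 * t ^ 4 + 4 * t ^ 2 + 2 - 16 / 27 - 8 * r / 9 * (t ^ 3 + t)
        - 4 * r / 9 * (4 * t)) := by
    linear_combination (18 * t ^ 4 + 4 * r * t ^ 3 + 30 * t ^ 2) * hr3
  nlinarith
end

section
/- Let d ≥ 1 be an integer and let ε be a real number with 0 < ε ≤ 8/(3√3(d+1)). Then the infimum over t ≥ 0 of the function t ↦ 2t + ε(d + t²(d−4))/(1+t²)² − εt²/(1+t²) − ε²t/(1+t²)² equals εd, and it is attained at t = 0. -/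
open Real MeasureTheory Finset Matrix Set

/-- For `0 < ε ≤ 8/(3√3(d+1))`, the infimum over `t ≥ 0` of
`2t + ε(d + t²(d-4))/(1+t²)² - εt²/(1+t²) - ε²t/(1+t²)²` equals `εd`, attained at `t = 0`. -/
theorem kappa_inf_quartic (d : ℕ) (hd : 1 ≤ d) (ε : ℝ) (hε : 0 < ε)
    (hε' : ε ≤ 8 / (3 * Real.sqrt 3 * ((d : ℝ) + 1))) :
    IsLeast
        ((fun t : ℝ => 2 * t + ε * ((d : ℝ) + t ^ 2 * ((d : ℝ) - 4)) / (1 + t ^ 2) ^ 2 -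
            ε * t ^ 2 / (1 + t ^ 2) - ε ^ 2 * t / (1 + t ^ 2) ^ 2) '' Set.Ici 0)
        (ε * d) ∧
      2 * (0 : ℝ) + ε * ((d : ℝ) + (0 : ℝ) ^ 2 * ((d : ℝ) - 4)) / (1 + (0 : ℝ) ^ 2) ^ 2 -
          ε * (0 : ℝ) ^ 2 / (1 + (0 : ℝ) ^ 2) - ε ^ 2 * (0 : ℝ) / (1 + (0 : ℝ) ^ 2) ^ 2 =
        ε * d := by
  have h0 : 2 * (0 : ℝ) + ε * ((d : ℝ) + (0 : ℝ) ^ 2 * ((d : ℝ) - 4)) / (1 + (0 : ℝ) ^ 2) ^ 2 -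
          ε * (0 : ℝ) ^ 2 / (1 + (0 : ℝ) ^ 2) - ε ^ 2 * (0 : ℝ) / (1 + (0 : ℝ) ^ 2) ^ 2 =
        ε * d := by norm_num
  refine ⟨⟨⟨0, Set.mem_Ici.mpr le_rfl, h0⟩, ?_⟩, h0⟩
  rintro _ ⟨t, ht, rfl⟩
  have ht : 0 ≤ t := ht
  have hd1 : (1 : ℝ) ≤ d := by exact_mod_cast hd
  have hs : 0 < Real.sqrt 3 := by positivity
  have hs2 : Real.sqrt 3 ^ 2 = 3 := Real.sq_sqrt (by norm_num)
  obtain ⟨u, hu⟩ : ∃ u : ℝ, u = Real.sqrt 3 / 3 := ⟨_, rfl⟩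
  have hu0 : 0 < u := by rw [hu]; positivity
  have hu2 : u ^ 2 = 1 / 3 := by rw [hu, div_pow, hs2]; norm_num
  have hsu : Real.sqrt 3 = 3 * u := by rw [hu]; ring
  have h1 : ε * ((d : ℝ) + 1) ≤ 8 * u / 3 := by
    rw [hsu, le_div_iff₀ (by positivity)] at hε'
    have := mul_le_mul_of_nonneg_right hε' hu0.le
    have e : ε * (3 * (3 * u) * ((d : ℝ) + 1)) * u = 9 * u ^ 2 * (ε * (d + 1)) := by ring
    rw [e, hu2] at this
    linarith
  have h2 : ε ≤ 4 * u / 3 := by nlinarith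
  have h3 : ε ^ 2 ≤ 16 / 27 := by
    have := pow_le_pow_left₀ hε.le h2 2
    have e : (4 * u / 3) ^ 2 = 16 / 9 * u ^ 2 := by ring
    rw [e, hu2] at this
    linarith
  have h4 : 0 ≤ 2 * (1 + t ^ 2) ^ 2 - 8 * u * t - 8 * u / 3 * t ^ 3 - 16 / 27 := by
    have e : 2 * (1 + t ^ 2) ^ 2 - 8 * u * t - 8 * u / 3 * t ^ 3 - 16 / 27 =
        (t - u) ^ 2 * (2 * t ^ 2 + 4 * u / 3 * t + 38 / 9) := by
      linear_combination (2 / 3 * t ^ 2 - 4 * u / 3 * t - 38 / 9) * hu2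
    rw [e]
    positivity
  have h5 : 0 ≤ 2 * (1 + t ^ 2) ^ 2 - ε * (d + 1) * (t + t ^ 3) - 4 * ε * t - ε ^ 2 := by
    have a := mul_le_mul_of_nonneg_right h1 (show 0 ≤ t + t ^ 3 by positivity)
    have b := mul_le_mul_of_nonneg_right h2 ht
    linarith
  have key : (2 * t + ε * ((d : ℝ) + t ^ 2 * ((d : ℝ) - 4)) / (1 + t ^ 2) ^ 2 -
            ε * t ^ 2 / (1 + t ^ 2) - ε ^ 2 * t / (1 + t ^ 2) ^ 2) - ε * d =
      t * (2 * (1 + t ^ 2) ^ 2 - ε * (d + 1) * (t + t ^ 3) - 4 * ε * t - ε ^ 2) /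
        (1 + t ^ 2) ^ 2 := by
    have : (1 + t ^ 2) ≠ 0 := by positivity
    field_simp
    ring
  have h6 : 0 ≤ t * (2 * (1 + t ^ 2) ^ 2 - ε * (d + 1) * (t + t ^ 3) - 4 * ε * t - ε ^ 2) /
        (1 + t ^ 2) ^ 2 := div_nonneg (mul_nonneg ht h5) (by positivity)
  show ε * d ≤ 2 * t + ε * ((d : ℝ) + t ^ 2 * ((d : ℝ) - 4)) / (1 + t ^ 2) ^ 2 -
            ε * t ^ 2 / (1 + t ^ 2) - ε ^ 2 * t / (1 + t ^ 2) ^ 2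
  linarith
end

section
/- Let d ≥ 1, let κ ∈ ℝ, and let A : [0, ∞) → M_d(ℝ) be a continuous map taking values in symmetric matrices such that for all t ≥ 0 and all y ∈ ℝ^d one has yᵀ(A(t)+A(t)ᵀ)y ≥ κ|y|². Let J : [0, ∞) → M_d(ℝ) be differentiable with J(0) = I_d and J'(t) = −J(t)A(t) for all t > 0. Then for every y ∈ ℝ^d and every t ≥ 0 one has yᵀ J(t) J(t)ᵀ y ≤ e^{−κt} |y|². -/
open Real MeasureTheory Finset Matrix Set

/-- Grönwall-type estimate: if `J(0) = I`, `J'(t) = -J(t)A(t)` with `A(t)`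
symmetric and `yᵀ(A(t)+A(t)ᵀ)y ≥ κ|y|²`, then `yᵀ J(t)J(t)ᵀ y ≤ e^{-κt}|y|²`. -/
theorem gronwall_matrix_estimate {d : ℕ} (hd : 1 ≤ d) (κ : ℝ)
    (A J : ℝ → Matrix (Fin d) (Fin d) ℝ)
    (hAcont : ∀ i j : Fin d, ContinuousOn (fun t => A t i j) (Set.Ici 0))
    (hAsymm : ∀ t : ℝ, 0 ≤ t → (A t).IsSymm)
    (hAκ : ∀ t : ℝ, 0 ≤ t → ∀ y : Fin d → ℝ,
      κ * ∑ i, y i ^ 2 ≤ y ⬝ᵥ ((A t + (A t)ᵀ) *ᵥ y))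
    (hJ0 : J 0 = 1)
    (hJdiff : ∀ (i j : Fin d) (t : ℝ), 0 ≤ t →
      DifferentiableWithinAt ℝ (fun s => J s i j) (Set.Ici 0) t)
    (hJ' : ∀ (i j : Fin d) (t : ℝ), 0 < t →
      HasDerivAt (fun s => J s i j) ((-(J t * A t)) i j) t)
    (y : Fin d → ℝ) (t : ℝ) (ht : 0 ≤ t) :
    y ⬝ᵥ ((J t * (J t)ᵀ) *ᵥ y) ≤ Real.exp (-κ * t) * ∑ i, y i ^ 2 := by
  have hz : ∀ s : ℝ, 0 < s → ∀ j, HasDerivAt (fun s => (y ᵥ* J s) j)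
      (-(((y ᵥ* J s) ᵥ* A s) j)) s := by
    intro s hs j
    have h : HasDerivAt (fun s => ∑ i, y i * J s i j)
        (∑ i, y i * (-(J s * A s)) i j) s :=
      HasDerivAt.fun_sum fun i _ => (hJ' i j s hs).const_mul (y i)
    have e : (-(((y ᵥ* J s) ᵥ* A s) j)) = ∑ i, y i * (-(J s * A s)) i j := by
      rw [Matrix.vecMul_vecMul]
      simp [Matrix.vecMul, dotProduct]
    rw [e]
    exact h
  have hzc : ∀ j, ContinuousOn (fun s => (y ᵥ* J s) j) (Set.Ici 0) := by
    intro j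
    have h : ContinuousOn (fun s => ∑ i, y i * J s i j) (Set.Ici 0) :=
      continuousOn_finsetSum _ fun i _ =>
        continuousOn_const.mul fun s hs => (hJdiff i j s hs).continuousWithinAt
    exact h
  have hg : ∀ s : ℝ, 0 < s → HasDerivAt
      (fun s => Real.exp (κ * s) * ∑ j, (y ᵥ* J s) j ^ 2)
      (Real.exp (κ * s) * (κ * ∑ j, (y ᵥ* J s) j ^ 2
        - 2 * ((y ᵥ* J s) ᵥ* A s ⬝ᵥ (y ᵥ* J s)))) s := by
    intro s hs
    have h1 : HasDerivAt (fun s : ℝ => Real.exp (κ * s)) (Real.exp (κ * s) * (κ * 1)) s :=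
      ((hasDerivAt_id s).const_mul κ).exp
    have h2 := h1.mul (HasDerivAt.fun_sum (u := Finset.univ)
      fun j _ => (hz s hs j).pow 2)
    refine h2.congr_deriv ?_
    have e : ∑ j, (((2 : ℕ) : ℝ) * (y ᵥ* J s) j ^ (2 - 1) * -(((y ᵥ* J s) ᵥ* A s) j))
        = - (2 * ((y ᵥ* J s) ᵥ* A s ⬝ᵥ (y ᵥ* J s))) := by
      rw [dotProduct, Finset.mul_sum, ← Finset.sum_neg_distrib]
      refine Finset.sum_congr rfl fun j _ => ?_
      norm_num
      ring
    rw [e]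
    simp only [Pi.pow_apply]
    ring
  have hanti : AntitoneOn (fun s => Real.exp (κ * s) * ∑ j, (y ᵥ* J s) j ^ 2)
      (Set.Ici 0) := by
    apply antitoneOn_of_deriv_nonpos (convex_Ici 0)
    · exact ContinuousOn.mul (by fun_prop) (continuousOn_finsetSum _ fun j _ => (hzc j).pow 2)
    · intro s hs
      rw [interior_Ici] at hs
      exact (hg s hs).differentiableAt.differentiableWithinAt
    · intro s hs
      rw [interior_Ici] at hs
      rw [(hg s hs).deriv]
      have h := hAκ s (le_of_lt hs) (y ᵥ* J s)
      rw [Matrix.add_mulVec, dotProduct_add, Matrix.mulVec_transpose,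
        Matrix.dotProduct_mulVec, dotProduct_comm (y ᵥ* J s) (_ ᵥ* A s)] at h
      exact mul_nonpos_of_nonneg_of_nonpos (Real.exp_pos _).le (by linarith)
  have h := hanti (Set.mem_Ici.2 le_rfl) (Set.mem_Ici.2 ht) ht
  simp only [hJ0, Matrix.vecMul_one, mul_zero, Real.exp_zero, one_mul] at h
  have e : y ⬝ᵥ ((J t * (J t)ᵀ) *ᵥ y) = ∑ j, (y ᵥ* J t) j ^ 2 := by
    rw [← Matrix.mulVec_mulVec, Matrix.dotProduct_mulVec, Matrix.mulVec_transpose]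
    simp [dotProduct, sq]
  rw [e]
  calc ∑ j, (y ᵥ* J t) j ^ 2
      = Real.exp (-κ * t) * (Real.exp (κ * t) * ∑ j, (y ᵥ* J t) j ^ 2) := by
        rw [← mul_assoc, ← Real.exp_add]
        simp
    _ ≤ _ := mul_le_mul_of_nonneg_left h (Real.exp_pos _).le
end
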